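/- Let φ_(k) and φ_(k') be intermittent shear profiles built from a smooth φ: ℝ → ℝ supported in [−1,1], with the same parameters r ∈ (0,1), λ ≥ r^{−1} with rλ ∈ ℕ, and integer N ≥ 1, associated to two non-parallel unit vectors k, k' with Nk, Nk' ∈ ℤ³. Then there exists a constant C, depending only on N, k and k' (and fixed geometric quantities), such that the Lebesgue measure of the support of the product satisfies |{x ∈ [−π,π]³ : φ_(k)(x) φ_(k')(x) ≠ 0}| ≤ C r². -/

import Mathlib

/-!
STATEMENT 9: Support estimate for the product of two intermittent shear profiles with
non-parallel directions: |{x ∈ [−π,π]³ : φ_(k)(x) φ_(k')(x) ≠ 0}| ≤ C r²,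
with C = C(N, k, k') independent of φ, r, λ.
-/

noncomputable section

open MeasureTheory Real
open scoped ENNReal

/-- The fundamental domain [−π,π]³ of the torus T³. -/
def dom : Set (Fin 3 → ℝ) := Set.Icc (fun _ => -π) (fun _ => π)

/-- The 2π-periodization of the rescaled profile r^{−1/2} φ(·/r). -/
def periodize (r : ℝ) (φ : ℝ → ℝ) (y : ℝ) : ℝ :=
  ∑' n : ℤ, (Real.sqrt r)⁻¹ * φ ((y + 2 * π * (n : ℝ)) / r)

/-- The intermittent shear profile φ_(k)(x) = φ_r(λ r N k·x). -/
def shear (φ : ℝ → ℝ) (r lam : ℝ) (N : ℕ) (k : Fin 3 → ℝ) (x : Fin 3 → ℝ) : ℝ :=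
  periodize r φ (lam * r * (N : ℝ) * ∑ i, k i * x i)

theorem periodize_ne_zero_aux {r : ℝ} (hr : 0 < r) {φ : ℝ → ℝ}
    (hφ : Function.support φ ⊆ Set.Icc (-1 : ℝ) 1) {y : ℝ} (h : periodize r φ y ≠ 0) :
    ∃ n : ℤ, |y + 2 * π * (n : ℝ)| ≤ r := by
  by_contra hcon
  push Not at hcon
  apply h
  unfold periodize
  have : ∀ n : ℤ, (Real.sqrt r)⁻¹ * φ ((y + 2 * π * (n : ℝ)) / r) = 0 := by
    intro n
    have h0 : φ ((y + 2 * π * (n : ℝ)) / r) = 0 := by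
      by_contra hne
      have h1 := hφ hne
      have h2 : |(y + 2 * π * (n : ℝ)) / r| ≤ 1 := abs_le.2 h1
      rw [abs_div, abs_of_pos hr, div_le_one hr] at h2
      exact absurd h2 (not_le.2 (hcon n))
    rw [h0, mul_zero]
  simp [this]

theorem index_bound_aux {r M y : ℝ} {K : ℕ} (hr : r < 1) (hM : M = K) (hM1 : 1 ≤ M)
    (hy : |y| ≤ 3 * π * M) {n : ℤ} (h : |y + 2 * π * (n : ℝ)| ≤ r) :
    n ∈ Finset.Icc (-(2 * K : ℤ)) (2 * K : ℤ) := by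
  rw [abs_le] at hy h
  have hpi := Real.pi_gt_three
  have h1 : π * (n : ℝ) ≤ π * (2 * M) := by nlinarith
  have h2 : π * (-(2 * M)) ≤ π * (n : ℝ) := by nlinarith
  have h3 := le_of_mul_le_mul_left h1 Real.pi_pos
  have h4 := le_of_mul_le_mul_left h2 Real.pi_pos
  rw [Finset.mem_Icc]
  rw [hM] at h3 h4
  constructor
  · exact_mod_cast h4
  · exact_mod_cast h3

theorem dot_bound_aux {B : ℝ} {k x : Fin 3 → ℝ} (hk : ∀ i, |k i| ≤ B)
    (hx : x ∈ dom) : |∑ i, k i * x i| ≤ 3 * (B * π) := by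
  have h : ∀ i, |k i * x i| ≤ B * π := by
    intro i
    rw [abs_mul]
    have : |x i| ≤ π := abs_le.2 ⟨hx.1 i, hx.2 i⟩
    exact mul_le_mul (hk i) this (abs_nonneg _) ((abs_nonneg _).trans (hk i))
  calc |∑ i, k i * x i| ≤ ∑ i, |k i * x i| := Finset.abs_sum_le_sum_abs _ _
    _ ≤ ∑ _i : Fin 3, B * π := Finset.sum_le_sum fun i _ => h i
    _ = 3 * (B * π) := by simp

theorem unit_bound_aux {k : Fin 3 → ℝ} (hk : ∑ i, k i ^ 2 = 1) (i : Fin 3) : |k i| ≤ 1 := by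
  rw [← sq_le_one_iff_abs_le_one, ← hk]
  exact Finset.single_le_sum (f := fun i => k i ^ 2) (fun j _ => sq_nonneg _) (Finset.mem_univ i)

/-- The cross product, written out. -/
def crossAux (k k' : Fin 3 → ℝ) : Fin 3 → ℝ :=
  ![k 1 * k' 2 - k 2 * k' 1, k 2 * k' 0 - k 0 * k' 2, k 0 * k' 1 - k 1 * k' 0]

theorem cross_bound_aux {k k' : Fin 3 → ℝ} (hk : ∀ i, |k i| ≤ 1) (hk' : ∀ i, |k' i| ≤ 1)
    (i : Fin 3) : |crossAux k k' i| ≤ 2 := by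
  have h : ∀ i j, |k i * k' j| ≤ 1 := fun i j => by
    rw [abs_mul]; exact mul_le_one₀ (hk i) (abs_nonneg _) (hk' j)
  have h2 : ∀ i j i' j', |k i * k' j - k i' * k' j'| ≤ 2 := fun i j i' j' => by
    have := abs_sub (k i * k' j) (k i' * k' j')
    linarith [h i j, h i' j']
  fin_cases i <;> simpa [crossAux] using h2 _ _ _ _

theorem cross_pos_aux {k k' : Fin 3 → ℝ} (hk : ∑ i, k i ^ 2 = 1) (hk' : ∑ i, k' i ^ 2 = 1)
    (hnonpar : ∀ c : ℝ, k' ≠ c • k) : 0 < ∑ i, crossAux k k' i ^ 2 := by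
  by_contra hcon
  have h0 : ∑ i, crossAux k k' i ^ 2 = 0 :=
    le_antisymm (not_lt.1 hcon) (Finset.sum_nonneg fun i _ => sq_nonneg _)
  set c := ∑ i, k i * k' i with hc
  have key : ∑ i, (k' i - c * k i) ^ 2 = 0 := by
    have e1 : ∑ i, (k' i - c * k i) ^ 2
        = ∑ i, k' i ^ 2 - 2 * c * (∑ i, k i * k' i) + c ^ 2 * ∑ i, k i ^ 2 := by
      simp only [Fin.sum_univ_three]; ring
    have e2 : ∑ i, crossAux k k' i ^ 2
        = (∑ i, k i ^ 2) * (∑ i, k' i ^ 2) - (∑ i, k i * k' i) ^ 2 := by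
      simp [Fin.sum_univ_three, crossAux]; ring
    rw [hk, hk', ← hc, h0] at e2
    rw [hk, hk', ← hc] at e1
    rw [e1]; linarith
  rw [Finset.sum_eq_zero_iff_of_nonneg fun i _ => sq_nonneg _] at key
  apply hnonpar c
  funext i
  have := pow_eq_zero_iff (two_ne_zero) |>.1 (key i (Finset.mem_univ i))
  simp only [Pi.smul_apply, smul_eq_mul]
  linarith

/-- The matrix of the change of variables. -/
def matAux (M : ℝ) (k k' : Fin 3 → ℝ) : Matrix (Fin 3) (Fin 3) ℝ :=
  Matrix.of ![fun i => M * k i, fun i => M * k' i, crossAux k k']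

theorem mat_det_aux (M : ℝ) (k k' : Fin 3 → ℝ) :
    (matAux M k k').det = M ^ 2 * ∑ i, crossAux k k' i ^ 2 := by
  rw [Matrix.det_fin_three]
  simp [matAux, crossAux, Fin.sum_univ_three]
  ring

theorem shear_product_support_estimate
    (N : ℕ) (hN : 1 ≤ N)
    (k k' : Fin 3 → ℝ) (hk : ∑ i, k i ^ 2 = 1) (hk' : ∑ i, k' i ^ 2 = 1)
    (hkZ : ∀ i, ∃ z : ℤ, (N : ℝ) * k i = (z : ℝ))
    (hk'Z : ∀ i, ∃ z : ℤ, (N : ℝ) * k' i = (z : ℝ))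
    (hnonpar : ∀ c : ℝ, k' ≠ c • k) :
    ∃ C : ℝ, 0 < C ∧
      ∀ (φ : ℝ → ℝ), ContDiff ℝ (⊤ : ℕ∞) φ → Function.support φ ⊆ Set.Icc (-1 : ℝ) 1 →
      ∀ r lam : ℝ, 0 < r → r < 1 → r⁻¹ ≤ lam → (∃ m : ℕ, r * lam = (m : ℝ)) →
        volume {x | x ∈ dom ∧ shear φ r lam N k x * shear φ r lam N k' x ≠ 0}
          ≤ ENNReal.ofReal (C * r ^ 2) := by
  have hδ := cross_pos_aux hk hk' hnonpar
  set δ := ∑ i, crossAux k k' i ^ 2 with hδdef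
  have hkb := unit_bound_aux hk
  have hkb' := unit_bound_aux hk'
  refine ⟨1200 * π / δ, by positivity, ?_⟩
  intro φ _ hφ r lam hr hr1 hlam ⟨m, hm⟩
  have hm1 : (1 : ℝ) ≤ m := by
    rw [← hm]
    calc (1 : ℝ) = r * r⁻¹ := (mul_inv_cancel₀ hr.ne').symm
      _ ≤ r * lam := by gcongr
  have hN1 : (1 : ℝ) ≤ N := by exact_mod_cast hN
  obtain ⟨M, hM⟩ : ∃ M : ℝ, M = ((m * N : ℕ) : ℝ) := ⟨_, rfl⟩
  have hMeq : lam * r * (N : ℝ) = M := by rw [hM, mul_comm lam r, hm]; push_cast; ring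
  have hM1 : 1 ≤ M := by
    rw [hM]; push_cast; nlinarith
  set T := Matrix.toLin' (matAux M k k') with hT
  have hdet : LinearMap.det T = M ^ 2 * δ := by rw [hT, LinearMap.det_toLin', mat_det_aux]
  have hdet0 : 0 < M ^ 2 * δ := by positivity
  set I := Finset.Icc (-(2 * (m * N : ℕ) : ℤ)) (2 * (m * N : ℕ) : ℤ) with hI
  let box : ℤ × ℤ → Set (Fin 3 → ℝ) := fun p =>
    Set.Icc ![-(2 * π * (p.1 : ℝ)) - r, -(2 * π * (p.2 : ℝ)) - r, -(6 * π)]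
      ![-(2 * π * (p.1 : ℝ)) + r, -(2 * π * (p.2 : ℝ)) + r, 6 * π]
  have hbox : ∀ p, volume (box p) = ENNReal.ofReal (2 * r * (2 * r) * (12 * π)) := by
    intro p
    simp only [box]
    rw [Real.volume_Icc_pi, ← ENNReal.ofReal_prod_of_nonneg]
    · congr 1
      simp [Fin.prod_univ_three]
      ring
    · intro i _
      fin_cases i
      · simp; linarith
      · simp; linarith
      · simp; linarith [Real.pi_pos]
  have hsub : {x | x ∈ dom ∧ shear φ r lam N k x * shear φ r lam N k' x ≠ 0}
      ⊆ T ⁻¹' (⋃ p ∈ I ×ˢ I, box p) := by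
    rintro x ⟨hx, hne⟩
    have ha := left_ne_zero_of_mul hne
    have hb := right_ne_zero_of_mul hne
    unfold shear at ha hb
    rw [hMeq] at ha hb
    obtain ⟨n, hn⟩ := periodize_ne_zero_aux hr hφ ha
    obtain ⟨n', hn'⟩ := periodize_ne_zero_aux hr hφ hb
    have hd : ∀ q : Fin 3 → ℝ, (∀ i, |q i| ≤ 1) → |M * ∑ i, q i * x i| ≤ 3 * π * M := by
      intro q hq
      have := dot_bound_aux hq hx
      rw [abs_mul, abs_of_pos (by linarith)]
      nlinarith
    have h1 := index_bound_aux hr1 hM hM1 (hd k hkb) hn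
    have h2 := index_bound_aux hr1 hM hM1 (hd k' hkb') hn'
    have h3 := dot_bound_aux (cross_bound_aux hkb hkb') hx
    rw [Set.mem_preimage, Set.mem_iUnion₂]
    refine ⟨(n, n'), Finset.mem_product.2 ⟨h1, h2⟩, ?_⟩
    have t0 : T x 0 = M * ∑ i, k i * x i := by
      simp [hT, matAux, Matrix.mulVec, dotProduct, Fin.sum_univ_three]; ring
    have t1 : T x 1 = M * ∑ i, k' i * x i := by
      simp [hT, matAux, Matrix.mulVec, dotProduct, Fin.sum_univ_three]; ring
    have t2 : T x 2 = ∑ i, crossAux k k' i * x i := by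
      simp [hT, matAux, Matrix.mulVec, dotProduct, Fin.sum_univ_three]
    rw [← t0, abs_le] at hn
    rw [← t1, abs_le] at hn'
    rw [← t2, abs_le] at h3
    simp only [box]
    constructor
    · intro i
      fin_cases i
      · simp; linarith
      · simp; linarith
      · simp; linarith
    · intro i
      fin_cases i
      · simp; linarith
      · simp; linarith
      · simp; linarith
  have hcard : ((I ×ˢ I).card : ℝ) ≤ 25 * M ^ 2 := by
    have : (I.card : ℝ) = 4 * M + 1 := by
      rw [hI, Int.card_Icc, hM]
      have : (2 * ((m * N : ℕ) : ℤ) + 1 - -(2 * ((m * N : ℕ) : ℤ))).toNat = 4 * (m * N) + 1 := by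
        omega
      rw [this]; push_cast; ring
    rw [Finset.card_product]; push_cast; rw [this]
    nlinarith
  calc volume {x | x ∈ dom ∧ shear φ r lam N k x * shear φ r lam N k' x ≠ 0}
      ≤ volume (T ⁻¹' (⋃ p ∈ I ×ˢ I, box p)) := measure_mono hsub
    _ = ENNReal.ofReal |(LinearMap.det T)⁻¹| * volume (⋃ p ∈ I ×ˢ I, box p) :=
        Measure.addHaar_preimage_linearMap _ (by rw [hdet]; exact hdet0.ne') _
    _ ≤ ENNReal.ofReal |(LinearMap.det T)⁻¹| * ∑ p ∈ I ×ˢ I, volume (box p) := by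
        gcongr; exact measure_biUnion_finset_le _ _
    _ = ENNReal.ofReal (M ^ 2 * δ)⁻¹ *
          (ENNReal.ofReal ((I ×ˢ I).card : ℝ) * ENNReal.ofReal (2 * r * (2 * r) * (12 * π))) := by
        rw [hdet, abs_of_pos (inv_pos.2 hdet0)]
        simp only [hbox, Finset.sum_const, nsmul_eq_mul, ENNReal.ofReal_natCast]
    _ = ENNReal.ofReal ((M ^ 2 * δ)⁻¹ * (((I ×ˢ I).card : ℝ) * (2 * r * (2 * r) * (12 * π)))) := by
        rw [← ENNReal.ofReal_mul (by positivity), ← ENNReal.ofReal_mul (by positivity)]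
    _ ≤ ENNReal.ofReal (1200 * π / δ * r ^ 2) := by
        apply ENNReal.ofReal_le_ofReal
        calc (M ^ 2 * δ)⁻¹ * (((I ×ˢ I).card : ℝ) * (2 * r * (2 * r) * (12 * π)))
            ≤ (M ^ 2 * δ)⁻¹ * ((25 * M ^ 2) * (2 * r * (2 * r) * (12 * π))) := by gcongr
          _ = 1200 * π / δ * r ^ 2 := by
            have : M ≠ 0 := by linarith
            field_simp
            ring

end
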